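/- With L^{(0)} = { ρ_1^{2l_1} ρ_2^{2l_2}(h_0) : l_1, l_2 ∈ ℤ }, L^{(1)} = { ρ_1^{2l_1+1} ρ_2^{2l_2}(h_0) : l_1, l_2 ∈ ℤ }, L^{(2)} = { ρ_1^{2l_1} ρ_2^{2l_2+1}(h_0) : l_1, l_2 ∈ ℤ }, L^{(12)} = { ρ_1^{2l_1+1} ρ_2^{2l_2+1}(h_0) : l_1, l_2 ∈ ℤ }, and with the displacement vectors v_1 = −h_0−h_1+2h_2−h_3−h_4 and v_2 = −h_0+h_1−h_3+h_4, one has: L^{(0)} = h_0 + ℤv_1 + ℤv_2, L^{(1)} = −h_1+h_2+h_5 + ℤv_1 + ℤv_2, L^{(2)} = h_4+h_5+h_6 + ℤv_1 + ℤv_2, L^{(12)} = h_2−h_3+h_6 + ℤv_1 + ℤv_2; moreover for every λ in L = L^{(0)} ∪ L^{(1)} ∪ L^{(2)} ∪ L^{(12)}, ρ_1^2(λ) = λ + v_1 and ρ_2^2(λ) = λ + v_2, and ρ_0^2(h_0) = h_0 + v_0 where v_0 = −h_0+h_1+h_3−h_4. -/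

import Mathlib

/-! Let `φ(v) = v₀ + v₁ + 2v₂ + v₃ + v₄`. A direct computation shows that `ρ_1` and `ρ_2` preserve
`φ`, that their squares are the transvections `ρ_i²(v) = v + φ(v) v_i`, and that `φ(v_1) = 0 = φ(v_2)`.
Hence `ρ_i²` is the translation by `v_i` on the affine hyperplane `φ = 1`, which contains `h_0` and is
stable under `ρ_1`, `ρ_2` (so it contains all of `L`), and `ρ_i^{2l}` is the translation by `l v_i` there
(`zpow_two_mul_mulVec`). Since moreover `ρ_1` fixes `v_2`, the vector
`ρ_1^{2l_1+a} ρ_2^{2l_2+b}(h_0)` equals `ρ_1^a ρ_2^b(h_0) + l_1 v_1 + l_2 v_2`, and the four base points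
`ρ_1^a ρ_2^b(h_0)`, `a, b ∈ {0, 1}`, are read off from the formulas for `ρ_1` and `ρ_2`. -/

open Matrix

/-- `P = ℤ^7`, the free `ℤ`-module with basis `h_0, …, h_6`. -/
abbrev P7 : Type := Fin 7 → ℤ

/-- The basis vector `h_i` of `P`. -/
def hv (i : Fin 7) : P7 := Pi.single i 1

/-- Matrix of `s_0` (columns = images of the basis vectors): `h_0 ↦ h_2 - h_0`. -/
def S0 : Matrix (Fin 7) (Fin 7) ℤ :=
  !![-1,0,0,0,0,0,0;
      0,1,0,0,0,0,0;
      1,0,1,0,0,0,0;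
      0,0,0,1,0,0,0;
      0,0,0,0,1,0,0;
      0,0,0,0,0,1,0;
      0,0,0,0,0,0,1]

/-- Matrix of `s_1`: `h_1 ↦ h_2 - h_1`. -/
def S1 : Matrix (Fin 7) (Fin 7) ℤ :=
  !![1,0,0,0,0,0,0;
     0,-1,0,0,0,0,0;
     0,1,1,0,0,0,0;
     0,0,0,1,0,0,0;
     0,0,0,0,1,0,0;
     0,0,0,0,0,1,0;
     0,0,0,0,0,0,1]

/-- Matrix of `s_2`: `h_2 ↦ h_0 + h_1 - h_2 + h_3 + h_4`. -/
def S2 : Matrix (Fin 7) (Fin 7) ℤ :=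
  !![1,0,1,0,0,0,0;
     0,1,1,0,0,0,0;
     0,0,-1,0,0,0,0;
     0,0,1,1,0,0,0;
     0,0,1,0,1,0,0;
     0,0,0,0,0,1,0;
     0,0,0,0,0,0,1]

/-- Matrix of `s_3`: `h_3 ↦ h_2 - h_3`. -/
def S3 : Matrix (Fin 7) (Fin 7) ℤ :=
  !![1,0,0,0,0,0,0;
     0,1,0,0,0,0,0;
     0,0,1,1,0,0,0;
     0,0,0,-1,0,0,0;
     0,0,0,0,1,0,0;
     0,0,0,0,0,1,0;
     0,0,0,0,0,0,1]

/-- Matrix of `s_4`: `h_4 ↦ h_2 - h_4`. -/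
def S4 : Matrix (Fin 7) (Fin 7) ℤ :=
  !![1,0,0,0,0,0,0;
     0,1,0,0,0,0,0;
     0,0,1,0,1,0,0;
     0,0,0,1,0,0,0;
     0,0,0,0,-1,0,0;
     0,0,0,0,0,1,0;
     0,0,0,0,0,0,1]

/-- Matrix of `σ_1`:
`(h_0,…,h_6) ↦ (h_1+h_5, h_0+h_5, h_2+2h_5, h_4+h_5, h_3+h_5, -h_5, h_6)`. -/
def Sig1 : Matrix (Fin 7) (Fin 7) ℤ :=
  !![0,1,0,0,0,0,0;
     1,0,0,0,0,0,0;
     0,0,1,0,0,0,0;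
     0,0,0,0,1,0,0;
     0,0,0,1,0,0,0;
     1,1,2,1,1,-1,0;
     0,0,0,0,0,0,1]

/-- Matrix of `σ_2`:
`(h_0,…,h_6) ↦ (h_3+h_6, h_4+h_6, h_2+2h_6, h_0+h_6, h_1+h_6, h_5, -h_6)`. -/
def Sig2 : Matrix (Fin 7) (Fin 7) ℤ :=
  !![0,0,0,1,0,0,0;
     0,0,0,0,1,0,0;
     0,0,1,0,0,0,0;
     1,0,0,0,0,0,0;
     0,1,0,0,0,0,0;
     0,0,0,0,0,1,0;
     1,1,2,1,1,0,-1]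

/-- `σ_3 = σ_1 ∘ σ_2`. -/
def Sig3 : Matrix (Fin 7) (Fin 7) ℤ := Sig1 * Sig2

/-- `s_0` on `P` as an invertible matrix (it is an involution). -/
def uS0 : (Matrix (Fin 7) (Fin 7) ℤ)ˣ := ⟨S0, S0, by decide, by decide⟩
/-- `s_1` on `P` as an invertible matrix. -/
def uS1 : (Matrix (Fin 7) (Fin 7) ℤ)ˣ := ⟨S1, S1, by decide, by decide⟩
/-- `s_2` on `P` as an invertible matrix. -/
def uS2 : (Matrix (Fin 7) (Fin 7) ℤ)ˣ := ⟨S2, S2, by decide, by decide⟩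
/-- `s_3` on `P` as an invertible matrix. -/
def uS3 : (Matrix (Fin 7) (Fin 7) ℤ)ˣ := ⟨S3, S3, by decide, by decide⟩
/-- `s_4` on `P` as an invertible matrix. -/
def uS4 : (Matrix (Fin 7) (Fin 7) ℤ)ˣ := ⟨S4, S4, by decide, by decide⟩
/-- `σ_1` on `P` as an invertible matrix. -/
def uSig1 : (Matrix (Fin 7) (Fin 7) ℤ)ˣ := ⟨Sig1, Sig1, by decide, by decide⟩
/-- `σ_2` on `P` as an invertible matrix. -/
def uSig2 : (Matrix (Fin 7) (Fin 7) ℤ)ˣ := ⟨Sig2, Sig2, by decide, by decide⟩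
/-- `σ_3 = σ_1 ∘ σ_2` on `P`. -/
def uSig3 : (Matrix (Fin 7) (Fin 7) ℤ)ˣ := uSig1 * uSig2

/-- `s_{β0} = s_4 s_3 s_1 s_0 s_2 s_4 s_3 s_1 s_0` on `P`. -/
def usb0 : (Matrix (Fin 7) (Fin 7) ℤ)ˣ := uS4 * uS3 * uS1 * uS0 * uS2 * uS4 * uS3 * uS1 * uS0
/-- `s_{γ0} = s_0 s_3 s_2 s_0 s_3` on `P`. -/
def usg0 : (Matrix (Fin 7) (Fin 7) ℤ)ˣ := uS0 * uS3 * uS2 * uS0 * uS3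
/-- `s_{ζ0} = σ_2 s_1 s_3 s_2 s_1 s_3 σ_2` on `P`. -/
def usz0 : (Matrix (Fin 7) (Fin 7) ℤ)ˣ := uSig2 * uS1 * uS3 * uS2 * uS1 * uS3 * uSig2
/-- `π_{βμ} = σ_1 s_4 s_3 s_1 s_0` on `P`. -/
def upbm : (Matrix (Fin 7) (Fin 7) ℤ)ˣ := uSig1 * uS4 * uS3 * uS1 * uS0
/-- `π_{γμ} = σ_3` on `P`. -/
def upgm : (Matrix (Fin 7) (Fin 7) ℤ)ˣ := uSig3
/-- `π_{ζμ} = σ_2` on `P`. -/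
def upzm : (Matrix (Fin 7) (Fin 7) ℤ)ˣ := uSig2
/-- `ρ_1 = s_{β0} π_{βμ}` on `P`. -/
def urho1 : (Matrix (Fin 7) (Fin 7) ℤ)ˣ := usb0 * upbm
/-- `ρ_2 = s_{γ0} π_{γμ}` on `P`. -/
def urho2 : (Matrix (Fin 7) (Fin 7) ℤ)ˣ := usg0 * upgm
/-- `ρ_0 = s_{ζ0} π_{ζμ}` on `P`. -/
def urho0 : (Matrix (Fin 7) (Fin 7) ℤ)ˣ := usz0 * upzm

/-- `L^{(0)} = { ρ_1^{2l_1} ρ_2^{2l_2}(h_0) : l_1, l_2 ∈ ℤ }`. -/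
def L0 : Set P7 :=
  {v | ∃ l1 l2 : ℤ,
    ((urho1 ^ (2*l1) * urho2 ^ (2*l2) : (Matrix (Fin 7) (Fin 7) ℤ)ˣ) :
      Matrix (Fin 7) (Fin 7) ℤ) *ᵥ hv 0 = v}

/-- `L^{(1)} = { ρ_1^{2l_1+1} ρ_2^{2l_2}(h_0) : l_1, l_2 ∈ ℤ }`. -/
def L1 : Set P7 :=
  {v | ∃ l1 l2 : ℤ,
    ((urho1 ^ (2*l1+1) * urho2 ^ (2*l2) : (Matrix (Fin 7) (Fin 7) ℤ)ˣ) :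
      Matrix (Fin 7) (Fin 7) ℤ) *ᵥ hv 0 = v}

/-- `L^{(2)} = { ρ_1^{2l_1} ρ_2^{2l_2+1}(h_0) : l_1, l_2 ∈ ℤ }`. -/
def L2 : Set P7 :=
  {v | ∃ l1 l2 : ℤ,
    ((urho1 ^ (2*l1) * urho2 ^ (2*l2+1) : (Matrix (Fin 7) (Fin 7) ℤ)ˣ) :
      Matrix (Fin 7) (Fin 7) ℤ) *ᵥ hv 0 = v}

/-- `L^{(12)} = { ρ_1^{2l_1+1} ρ_2^{2l_2+1}(h_0) : l_1, l_2 ∈ ℤ }`. -/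
def L12 : Set P7 :=
  {v | ∃ l1 l2 : ℤ,
    ((urho1 ^ (2*l1+1) * urho2 ^ (2*l2+1) : (Matrix (Fin 7) (Fin 7) ℤ)ˣ) :
      Matrix (Fin 7) (Fin 7) ℤ) *ᵥ hv 0 = v}

/-- `L = L^{(0)} ∪ L^{(1)} ∪ L^{(2)} ∪ L^{(12)}`. -/
def LL : Set P7 := L0 ∪ L1 ∪ L2 ∪ L12

/-- The displacement vector `v_0 = -h_0+h_1+h_3-h_4` of `ρ_0^2`. -/
def vv0 : P7 := ![-1,1,0,1,-1,0,0]
/-- The displacement vector `v_1 = -h_0-h_1+2h_2-h_3-h_4` of `ρ_1^2`. -/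
def vv1 : P7 := ![-1,-1,2,-1,-1,0,0]
/-- The displacement vector `v_2 = -h_0+h_1-h_3+h_4` of `ρ_2^2`. -/
def vv2 : P7 := ![-1,1,0,-1,1,0,0]

/-! ### The invariant linear form -/

/-- The linear form `φ` on `P` preserved by `ρ_1` and `ρ_2`; both square to the identity plus
`φ` times a displacement vector. -/
def phi (v : P7) : ℤ := v 0 + v 1 + 2 * v 2 + v 3 + v 4

lemma phi_add (v w : P7) : phi (v + w) = phi v + phi w := by
  simp only [phi, Pi.add_apply]; ring

lemma phi_sub (v w : P7) : phi (v - w) = phi v - phi w := by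
  simp only [phi, Pi.sub_apply]; ring

lemma phi_smul (n : ℤ) (v : P7) : phi (n • v) = n * phi v := by
  simp only [phi, Pi.smul_apply, smul_eq_mul]; ring

lemma phi_hv0 : phi (hv 0) = 1 := by decide
lemma phi_vv1 : phi vv1 = 0 := by decide
lemma phi_vv2 : phi vv2 = 0 := by decide

/-! ### Coordinate formulas for the automorphisms -/

lemma S0_mulVec (a b c d e f g : ℤ) :
    S0 *ᵥ ![a, b, c, d, e, f, g] = ![-a, b, a + c, d, e, f, g] := by
  ext i
  fin_cases i <;> simp [S0, Matrix.mulVec, dotProduct, Fin.sum_univ_succ]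

lemma S1_mulVec (a b c d e f g : ℤ) :
    S1 *ᵥ ![a, b, c, d, e, f, g] = ![a, -b, b + c, d, e, f, g] := by
  ext i
  fin_cases i <;> simp [S1, Matrix.mulVec, dotProduct, Fin.sum_univ_succ]

lemma S2_mulVec (a b c d e f g : ℤ) :
    S2 *ᵥ ![a, b, c, d, e, f, g] = ![a + c, b + c, -c, c + d, c + e, f, g] := by
  ext i
  fin_cases i <;> simp [S2, Matrix.mulVec, dotProduct, Fin.sum_univ_succ]

lemma S3_mulVec (a b c d e f g : ℤ) :
    S3 *ᵥ ![a, b, c, d, e, f, g] = ![a, b, c + d, -d, e, f, g] := by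
  ext i
  fin_cases i <;> simp [S3, Matrix.mulVec, dotProduct, Fin.sum_univ_succ]

lemma S4_mulVec (a b c d e f g : ℤ) :
    S4 *ᵥ ![a, b, c, d, e, f, g] = ![a, b, c + e, d, -e, f, g] := by
  ext i
  fin_cases i <;> simp [S4, Matrix.mulVec, dotProduct, Fin.sum_univ_succ]

lemma Sig1_mulVec (a b c d e f g : ℤ) :
    Sig1 *ᵥ ![a, b, c, d, e, f, g] = ![b, a, c, e, d, a + b + 2 * c + d + e - f, g] := by
  ext i
  fin_cases i <;> simp [Sig1, Matrix.mulVec, dotProduct, Fin.sum_univ_succ]; ring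

lemma Sig2_mulVec (a b c d e f g : ℤ) :
    Sig2 *ᵥ ![a, b, c, d, e, f, g] = ![d, e, c, a, b, f, a + b + 2 * c + d + e - g] := by
  ext i
  fin_cases i <;> simp [Sig2, Matrix.mulVec, dotProduct, Fin.sum_univ_succ]; ring

lemma urho1_mulVec (a b c d e f g : ℤ) :
    (urho1 : Matrix (Fin 7) (Fin 7) ℤ) *ᵥ ![a, b, c, d, e, f, g] =
      ![-b - c, -a - c, a + b + 3 * c + d + e, -c - e,
        -c - d, a + b + 2 * c + d + e - f, g] := by
  simp only [urho1, usb0, upbm, uS0, uS1, uS2, uS3, uS4, uSig1, Units.val_mul,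
    ← Matrix.mulVec_mulVec, S0_mulVec, S1_mulVec, S2_mulVec, S3_mulVec, S4_mulVec, Sig1_mulVec]
  congr! 1 <;> ring_nf

lemma urho2_mulVec (a b c d e f g : ℤ) :
    (urho2 : Matrix (Fin 7) (Fin 7) ℤ) *ᵥ ![a, b, c, d, e, f, g] =
      ![-b - c, b + c + d + e, c, -c - e,
        a + b + c + e, a + b + 2 * c + d + e - f, a + b + 2 * c + d + e - g] := by
  simp only [urho2, usg0, upgm, uSig3, uS0, uS2, uS3, uSig1, uSig2, Units.val_mul,
    ← Matrix.mulVec_mulVec, S0_mulVec, S2_mulVec, S3_mulVec, Sig1_mulVec, Sig2_mulVec]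
  congr! 1 <;> ring_nf

lemma urho0_mulVec (a b c d e f g : ℤ) :
    (urho0 : Matrix (Fin 7) (Fin 7) ℤ) *ᵥ ![a, b, c, d, e, f, g] =
      ![-b - c, b + c + d + e, c, a + b + c + d,
        -c - d, f, a + b + 2 * c + d + e - g] := by
  simp only [urho0, usz0, upzm, uS1, uS2, uS3, uSig2, Units.val_mul,
    ← Matrix.mulVec_mulVec, S1_mulVec, S2_mulVec, S3_mulVec, Sig2_mulVec]
  congr! 1 <;> ring_nf

/-! ### Squares and even powers of `ρ_1` and `ρ_2` -/

lemma eq_coords (v : P7) : v = ![v 0, v 1, v 2, v 3, v 4, v 5, v 6] := by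
  ext i; fin_cases i <;> rfl

lemma phi_urho1 (v : P7) : phi ((urho1 : Matrix (Fin 7) (Fin 7) ℤ) *ᵥ v) = phi v := by
  rw [eq_coords v, urho1_mulVec]; simp [phi]; ring

lemma phi_urho2 (v : P7) : phi ((urho2 : Matrix (Fin 7) (Fin 7) ℤ) *ᵥ v) = phi v := by
  rw [eq_coords v, urho2_mulVec]; simp [phi]; ring

lemma urho1_sq_mulVec (v : P7) :
    ((urho1 ^ 2 : (Matrix (Fin 7) (Fin 7) ℤ)ˣ) : Matrix (Fin 7) (Fin 7) ℤ) *ᵥ v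
      = v + phi v • vv1 := by
  rw [eq_coords v, sq, Units.val_mul, ← Matrix.mulVec_mulVec, urho1_mulVec, urho1_mulVec]
  ext i
  fin_cases i <;> simp [phi, vv1] <;> ring

lemma urho2_sq_mulVec (v : P7) :
    ((urho2 ^ 2 : (Matrix (Fin 7) (Fin 7) ℤ)ˣ) : Matrix (Fin 7) (Fin 7) ℤ) *ᵥ v
      = v + phi v • vv2 := by
  rw [eq_coords v, sq, Units.val_mul, ← Matrix.mulVec_mulVec, urho2_mulVec, urho2_mulVec]
  ext i
  fin_cases i <;> simp [phi, vv2] <;> ring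

/-- On the hyperplane `φ = 1`, the even powers of an automorphism with `U² = id + φ • w`, where
`φ w = 0`, are translations by multiples of `w`. -/
lemma zpow_two_mul_mulVec (U : (Matrix (Fin 7) (Fin 7) ℤ)ˣ) (w : P7) (hw : phi w = 0)
    (hU : ∀ v, ((U ^ 2 : (Matrix (Fin 7) (Fin 7) ℤ)ˣ) : Matrix (Fin 7) (Fin 7) ℤ) *ᵥ v
      = v + phi v • w) (l : ℤ) :
    ∀ v, phi v = 1 →
      ((U ^ (2 * l) : (Matrix (Fin 7) (Fin 7) ℤ)ˣ) : Matrix (Fin 7) (Fin 7) ℤ) *ᵥ v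
        = v + l • w := by
  induction l using Int.induction_on with
  | zero => intro v _; simp
  | succ i ih =>
    intro v hv1
    rw [show (2 * ((i : ℤ) + 1)) = 2 * i + (2 : ℕ) by push_cast; ring, _root_.zpow_add, _root_.zpow_natCast,
      Units.val_mul, ← Matrix.mulVec_mulVec, hU, hv1, one_smul,
      ih _ (by rw [phi_add, hv1, hw, add_zero]), add_smul, one_smul]
    abel
  | pred i ih =>
    intro v hv1
    have hφ : phi (v - w) = 1 := by rw [phi_sub, hv1, hw, sub_zero]
    -- `v = U² (v - w)`, so one factor `U²` cancels.
    have h2 := hU (v - w)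
    rw [hφ, one_smul, sub_add_cancel] at h2
    conv_lhs => rw [← h2]
    rw [Matrix.mulVec_mulVec, ← Units.val_mul, ← _root_.zpow_natCast, ← _root_.zpow_add,
      show 2 * (-(i : ℤ) - 1) + (2 : ℕ) = 2 * -(i : ℤ) by push_cast; ring, ih _ hφ, sub_smul,
      one_smul]
    abel

lemma urho1_mulVec_vv2 : (urho1 : Matrix (Fin 7) (Fin 7) ℤ) *ᵥ vv2 = vv2 := by
  rw [vv2, urho1_mulVec]; decide

lemma urho1_zpow (l : ℤ) {v : P7} (h : phi v = 1) :
    ((urho1 ^ (2 * l) : (Matrix (Fin 7) (Fin 7) ℤ)ˣ) : Matrix (Fin 7) (Fin 7) ℤ) *ᵥ v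
      = v + l • vv1 :=
  zpow_two_mul_mulVec urho1 vv1 phi_vv1 urho1_sq_mulVec l v h

lemma urho2_zpow (l : ℤ) {v : P7} (h : phi v = 1) :
    ((urho2 ^ (2 * l) : (Matrix (Fin 7) (Fin 7) ℤ)ˣ) : Matrix (Fin 7) (Fin 7) ℤ) *ᵥ v
      = v + l • vv2 :=
  zpow_two_mul_mulVec urho2 vv2 phi_vv2 urho2_sq_mulVec l v h

/-! ### The orbit of `h_0` -/

lemma hv0_eq : hv 0 = ![1, 0, 0, 0, 0, 0, 0] := by decide

lemma urho1_hv0 : (urho1 : Matrix (Fin 7) (Fin 7) ℤ) *ᵥ hv 0 = - hv 1 + hv 2 + hv 5 := by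
  rw [hv0_eq, urho1_mulVec]; decide

lemma urho2_hv0 : (urho2 : Matrix (Fin 7) (Fin 7) ℤ) *ᵥ hv 0 = hv 4 + hv 5 + hv 6 := by
  rw [hv0_eq, urho2_mulVec]; decide

lemma urho1_urho2_hv0 :
    (urho1 : Matrix (Fin 7) (Fin 7) ℤ) *ᵥ (hv 4 + hv 5 + hv 6) = hv 2 - hv 3 + hv 6 := by
  rw [show hv 4 + hv 5 + hv 6 = ![0, 0, 0, 0, 1, 1, 1] by decide, urho1_mulVec]; decide

lemma orbit_even_even (l m : ℤ) :
    ((urho1 ^ (2 * l) * urho2 ^ (2 * m) : (Matrix (Fin 7) (Fin 7) ℤ)ˣ) :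
      Matrix (Fin 7) (Fin 7) ℤ) *ᵥ hv 0 = hv 0 + l • vv1 + m • vv2 := by
  rw [Units.val_mul, ← Matrix.mulVec_mulVec, urho2_zpow m phi_hv0,
    urho1_zpow l (by rw [phi_add, phi_smul, phi_hv0, phi_vv2]; norm_num)]
  abel

lemma orbit_odd_even (l m : ℤ) :
    ((urho1 ^ (2 * l + 1) * urho2 ^ (2 * m) : (Matrix (Fin 7) (Fin 7) ℤ)ˣ) :
      Matrix (Fin 7) (Fin 7) ℤ) *ᵥ hv 0
        = (- hv 1 + hv 2 + hv 5) + l • vv1 + m • vv2 := by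
  rw [_root_.zpow_add, _root_.zpow_one, Units.val_mul, Units.val_mul, ← Matrix.mulVec_mulVec,
    ← Matrix.mulVec_mulVec, urho2_zpow m phi_hv0, urho1_zpow l
      (by rw [phi_urho1, phi_add, phi_smul, phi_hv0, phi_vv2]; norm_num),
    Matrix.mulVec_add, Matrix.mulVec_smul, urho1_mulVec_vv2, urho1_hv0]
  abel

lemma phi_base2 : phi (hv 4 + hv 5 + hv 6) = 1 := by decide

lemma orbit_even_odd (l m : ℤ) :
    ((urho1 ^ (2 * l) * urho2 ^ (2 * m + 1) : (Matrix (Fin 7) (Fin 7) ℤ)ˣ) :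
      Matrix (Fin 7) (Fin 7) ℤ) *ᵥ hv 0
        = (hv 4 + hv 5 + hv 6) + l • vv1 + m • vv2 := by
  rw [_root_.zpow_add, _root_.zpow_one, Units.val_mul, Units.val_mul, ← Matrix.mulVec_mulVec,
    ← Matrix.mulVec_mulVec, urho2_hv0, urho2_zpow m phi_base2,
    urho1_zpow l (by rw [phi_add, phi_smul, phi_base2, phi_vv2]; norm_num)]
  abel

lemma orbit_odd_odd (l m : ℤ) :
    ((urho1 ^ (2 * l + 1) * urho2 ^ (2 * m + 1) : (Matrix (Fin 7) (Fin 7) ℤ)ˣ) :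
      Matrix (Fin 7) (Fin 7) ℤ) *ᵥ hv 0
        = (hv 2 - hv 3 + hv 6) + l • vv1 + m • vv2 := by
  rw [_root_.zpow_add, _root_.zpow_add, _root_.zpow_one, _root_.zpow_one, Units.val_mul, Units.val_mul, Units.val_mul,
    ← Matrix.mulVec_mulVec, ← Matrix.mulVec_mulVec, ← Matrix.mulVec_mulVec, urho2_hv0,
    urho2_zpow m phi_base2, urho1_zpow l
      (by rw [phi_urho1, phi_add, phi_smul, phi_base2, phi_vv2]; norm_num),
    Matrix.mulVec_add, Matrix.mulVec_smul, urho1_mulVec_vv2, urho1_urho2_hv0]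
  abel

/-- All of `L` lies in the hyperplane `φ = 1`. -/
lemma phi_of_mem_LL {v : P7} (hv : v ∈ LL) : phi v = 1 := by
  have key (b : P7) (hb : phi b = 1) (l m : ℤ) : phi (b + l • vv1 + m • vv2) = 1 := by
    rw [phi_add, phi_add, phi_smul, phi_smul, phi_vv1, phi_vv2, hb]; norm_num
  rcases hv with ((⟨l, m, rfl⟩ | ⟨l, m, rfl⟩) | ⟨l, m, rfl⟩) | ⟨l, m, rfl⟩
  · rw [orbit_even_even]; exact key _ phi_hv0 l m
  · rw [orbit_odd_even]; exact key _ (by decide) l m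
  · rw [orbit_even_odd]; exact key _ phi_base2 l m
  · rw [orbit_odd_odd]; exact key _ (by decide) l m

/-- each sub-lattice `L^{(·)}` is a translate of `ℤv_1 + ℤv_2` with the
stated base points; on all of `L`, `ρ_1^2` and `ρ_2^2` act as the translations by `v_1`
and `v_2`, and `ρ_0^2(h_0) = h_0 + v_0`. -/
theorem statement18 :
    L0 = {v | ∃ m n : ℤ, v = hv 0 + m • vv1 + n • vv2} ∧
    L1 = {v | ∃ m n : ℤ, v = (- hv 1 + hv 2 + hv 5) + m • vv1 + n • vv2} ∧
    L2 = {v | ∃ m n : ℤ, v = (hv 4 + hv 5 + hv 6) + m • vv1 + n • vv2} ∧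
    L12 = {v | ∃ m n : ℤ, v = (hv 2 - hv 3 + hv 6) + m • vv1 + n • vv2} ∧
    (∀ v ∈ LL,
      ((urho1 ^ 2 : (Matrix (Fin 7) (Fin 7) ℤ)ˣ) : Matrix (Fin 7) (Fin 7) ℤ) *ᵥ v
          = v + vv1 ∧
      ((urho2 ^ 2 : (Matrix (Fin 7) (Fin 7) ℤ)ˣ) : Matrix (Fin 7) (Fin 7) ℤ) *ᵥ v
          = v + vv2) ∧
    ((urho0 ^ 2 : (Matrix (Fin 7) (Fin 7) ℤ)ˣ) : Matrix (Fin 7) (Fin 7) ℤ) *ᵥ hv 0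
        = hv 0 + vv0 := by
  refine ⟨?_, ?_, ?_, ?_, fun v hv => ⟨?_, ?_⟩, ?_⟩
  · ext v; simp only [L0, Set.mem_ofPred_eq, orbit_even_even, eq_comm]
  · ext v; simp only [L1, Set.mem_ofPred_eq, orbit_odd_even, eq_comm]
  · ext v; simp only [L2, Set.mem_ofPred_eq, orbit_even_odd, eq_comm]
  · ext v; simp only [L12, Set.mem_ofPred_eq, orbit_odd_odd, eq_comm]
  · rw [urho1_sq_mulVec, phi_of_mem_LL hv, one_smul]
  · rw [urho2_sq_mulVec, phi_of_mem_LL hv, one_smul]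
  · rw [sq, Units.val_mul, ← Matrix.mulVec_mulVec, hv0_eq, urho0_mulVec, urho0_mulVec]
    decide
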